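/- Let b > 0 be real. For every z ∈ ℂ with |Im z| < (b+b⁻¹)/2 one has the inversion relation e_b(z)·e_b(−z) = e^{πiz²}·e^{πi(b²+b⁻²)/12}. Equivalently, the function w_b(x) := e^{−(πi/12)(1+2c_b²)}·e^{πix²/2}/e_b(x) satisfies w_b(z)·w_b(−z) = 1 for all z in the strip. -/

import Mathlib

open MeasureTheory Complex Real Filter Topology

noncomputable section

/-- The special point `c_b = i(b+b⁻¹)/2`. -/
def cb (b : ℝ) : ℂ := Complex.I * ((b : ℂ) + (b : ℂ)⁻¹) / 2

/-- The integrand in the integral representation of the noncompact quantum dilogarithm. -/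
def ebIntegrand (b ε : ℝ) (z : ℂ) (t : ℝ) : ℂ :=
  Complex.exp (-2 * Complex.I * z * ((t : ℂ) + Complex.I * (ε : ℂ))) /
    (((t : ℂ) + Complex.I * (ε : ℂ)) *
      Complex.sinh ((b : ℂ) * ((t : ℂ) + Complex.I * (ε : ℂ))) *
      Complex.sinh ((b : ℂ)⁻¹ * ((t : ℂ) + Complex.I * (ε : ℂ))))

/-- The noncompact quantum dilogarithm defined with contour parameter `ε`. -/
def ebE (b ε : ℝ) (z : ℂ) : ℂ :=
  Complex.exp ((1 / 4 : ℂ) * ∫ t : ℝ, ebIntegrand b ε z t)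

/-- The noncompact quantum dilogarithm `e_b` (canonical choice of contour parameter;
the value is independent of this choice). -/
def eb (b : ℝ) (z : ℂ) : ℂ := ebE b (π * min b b⁻¹ / 2) z

/-- The function `w_b(x) = e^{−(πi/12)(1+2c_b²)}·e^{πix²/2}/e_b(x)`. -/
def wb (b : ℝ) (z : ℂ) : ℂ :=
  Complex.exp (-((π : ℂ) * Complex.I / 12) * (1 + 2 * (cb b) ^ 2)) *
    Complex.exp ((π : ℂ) * Complex.I * z ^ 2 / 2) / eb b z

/-!
Extend the integrand of `e_b` to the kernel `K_z(w) = e^{-2izw} / (w sinh(bw) sinh(b⁻¹w))`. Since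
`K_{-z}(w) = -K_z(-w)`, the sum `f = K_z + K_{-z}` is odd, so that its integral over `ℝ - iε` is
minus its integral over `ℝ + iε`. The latter is therefore half of the difference of the two, and
since `f` decays exponentially in the strip `|Im w| ≤ ε`, where its only pole is `0`, it equals
`-πi` times the residue. The pole is triple, and the residue is read off from the second order
expansions of `cosh(2izw)`, `bw / sinh(bw)` and `b⁻¹w / sinh(b⁻¹w)`.
-/

section Strip

/-- The closed horizontal strip of half-width `ε` around the real axis. -/
def closedStrip (ε : ℝ) : Set ℂ := {w | |w.im| ≤ ε}

/-- The filter of points running off to the left or to the right inside `closedStrip ε`; a limit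
along it is uniform in the imaginary part. -/
def stripEnds (ε : ℝ) : Filter ℂ := comap Complex.re (cocompact ℝ) ⊓ 𝓟 (closedStrip ε)

variable {E : Type*} [NormedAddCommGroup E] [NormedSpace ℂ E] {f : ℂ → E} {ε : ℝ}

lemma eventually_stripEnds {p : ℂ → Prop} :
    (∀ᶠ w in stripEnds ε, p w) ↔ ∀ᶠ x : ℝ in cocompact ℝ, ∀ y : ℝ, |y| ≤ ε → p (x + y * I) := by
  simp only [stripEnds, closedStrip, eventually_inf_principal, eventually_comap]
  refine eventually_congr <| .of_forall fun x =>
    ⟨fun h y hy => h _ (by simp) (by simpa using hy), ?_⟩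
  rintro h w rfl hw
  simpa only [re_add_im] using h w.im hw

lemma tendsto_horizontal_stripEnds {y : ℝ} (hy : |y| ≤ ε) :
    Tendsto (fun x : ℝ => (x + y * I : ℂ)) (cocompact ℝ) (stripEnds ε) :=
  fun _ hs => (eventually_stripEnds.1 hs).mono fun _ hx => hx y hy

lemma tendsto_inv_stripEnds : Tendsto (fun w : ℂ => w⁻¹) (stripEnds ε) (𝓝 0) :=
  tendsto_inv₀_cobounded.mono_left <| Metric.cobounded_eq_cocompact (α := ℂ) ▸
    inf_le_left.trans (comap_cocompact_le continuous_re)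

lemma tendsto_vertical_integral (hε : 0 ≤ ε) (hdecay : Tendsto f (stripEnds ε) (𝓝 0)) :
    Tendsto (fun x : ℝ => ∫ y in (-ε)..ε, f (x + y * I)) (cocompact ℝ) (𝓝 0) := by
  rw [Metric.tendsto_nhds]
  intro δ hδ
  have hη : 0 < δ / (|ε - -ε| + 1) := by positivity
  have hsmall : ∀ᶠ w in stripEnds ε, ‖f w‖ < δ / (|ε - -ε| + 1) := by
    simpa only [dist_zero_right] using Metric.tendsto_nhds.1 hdecay _ hη
  filter_upwards [eventually_stripEnds.1 hsmall] with x hx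
  rw [dist_zero_right]
  calc ‖∫ y in (-ε)..ε, f (x + y * I)‖ ≤ δ / (|ε - -ε| + 1) * |ε - -ε| := by
        refine intervalIntegral.norm_integral_le_of_norm_le_const fun y hy => (hx y ?_).le
        rw [Set.uIoc_of_le (by linarith)] at hy
        exact abs_le.2 ⟨hy.1.le, hy.2⟩
    _ < δ / (|ε - -ε| + 1) * (|ε - -ε| + 1) := by gcongr; linarith
    _ = δ := by field_simp

theorem integral_line_sub_line_eq_zero_of_differentiableOn [CompleteSpace E] (hε : 0 ≤ ε)
    (hf : DifferentiableOn ℂ f (closedStrip ε)) (hdecay : Tendsto f (stripEnds ε) (𝓝 0))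
    (hint : Integrable fun t : ℝ => f (t + ε * I) - f (t - ε * I)) :
    ∫ t : ℝ, (f (t + ε * I) - f (t - ε * I)) = 0 := by
  have hcont {y : ℝ} (hy : |y| ≤ ε) : Continuous fun t : ℝ => f (t + y * I) :=
    hf.continuousOn.comp_continuous (by fun_prop) fun t => by simpa [closedStrip] using hy
  have hrect (R : ℝ) : ∫ t in (-R)..R, (f (t + ε * I) - f (t - ε * I)) =
      I • (∫ y in (-ε)..ε, f (R + y * I)) - I • ∫ y in (-ε)..ε, f (↑(-R) + y * I) := by
    have hcauchy := integral_boundary_rect_eq_zero_of_differentiableOn f ⟨-R, -ε⟩ ⟨R, ε⟩ <|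
      hf.mono fun w hw => abs_le.2 (Set.uIcc_of_le (by linarith : -ε ≤ ε) ▸ hw.2)
    have hup := (hcont (abs_of_nonneg hε).le).intervalIntegrable (-R) R (μ := volume)
    have hlow := (hcont (y := -ε) (by rw [abs_neg, abs_of_nonneg hε])).intervalIntegrable (-R) R
      (μ := volume)
    simp only [ofReal_neg, neg_mul, ← sub_eq_add_neg] at hcauchy hlow ⊢
    rw [intervalIntegral.integral_sub hup hlow, ← sub_eq_zero, ← neg_eq_zero, ← hcauchy]
    abel
  have hright : Tendsto (fun R : ℝ => ∫ y in (-ε)..ε, f (R + y * I)) atTop (𝓝 0) :=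
    (tendsto_vertical_integral hε hdecay).mono_left atTop_le_cocompact
  have hleft : Tendsto (fun R : ℝ => ∫ y in (-ε)..ε, f (↑(-R) + y * I)) atTop (𝓝 0) :=
    (tendsto_vertical_integral hε hdecay).comp
      (tendsto_neg_atTop_atBot.mono_right atBot_le_cocompact)
  refine tendsto_nhds_unique (intervalIntegral_tendsto_integral hint tendsto_neg_atTop_atBot
    tendsto_id) ?_
  simpa only [id, hrect, smul_zero, sub_zero] using
    (hright.const_smul I).sub (hleft.const_smul I)

end Strip

section HorizontalIntegrals

variable {ε s : ℝ} {n : ℕ}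

lemma add_mul_I_ne_zero (hs : s ≠ 0) (t : ℝ) : (t + s * I : ℂ) ≠ 0 := fun h =>
  hs (by simpa using congrArg Complex.im h)

lemma inv_sq_add_sq_eq (hs : s ≠ 0) (t : ℝ) :
    (t ^ 2 + s ^ 2)⁻¹ = (s ^ 2)⁻¹ * (1 + (t / s) ^ 2)⁻¹ := by
  field_simp
  ring

lemma integrable_inv_sq_add_sq (hs : s ≠ 0) : Integrable fun t : ℝ => (t ^ 2 + s ^ 2)⁻¹ := by
  simp only [inv_sq_add_sq_eq hs]
  exact (integrable_inv_one_add_sq.comp_div hs).const_mul _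

lemma integral_univ_inv_sq_add_sq (hε : 0 < ε) : ∫ t : ℝ, (t ^ 2 + ε ^ 2)⁻¹ = π / ε := by
  simp only [inv_sq_add_sq_eq hε.ne']
  rw [integral_const_mul, Measure.integral_comp_div (fun x => (1 + x ^ 2)⁻¹),
    integral_univ_inv_one_add_sq, abs_of_pos hε, smul_eq_mul]
  field_simp

lemma inv_add_mul_I_sub_inv_sub_mul_I (hs : s ≠ 0) (t : ℝ) :
    (t + s * I : ℂ)⁻¹ - (t - s * I)⁻¹ = -2 * s * I * ((t ^ 2 + s ^ 2)⁻¹ : ℝ) := by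
  have hup := add_mul_I_ne_zero hs t
  have hlow : (t - s * I : ℂ) ≠ 0 := by
    simpa [sub_eq_add_neg] using add_mul_I_ne_zero (neg_ne_zero.2 hs) t
  have hprod : (t + s * I) * (t - s * I) = ((t ^ 2 + s ^ 2 : ℝ) : ℂ) := by
    push_cast
    linear_combination -(s : ℂ) ^ 2 * I_sq
  rw [inv_sub_inv hup hlow, hprod, ofReal_inv, div_eq_mul_inv]
  ring

lemma integrable_inv_sub_inv (hs : s ≠ 0) :
    Integrable fun t : ℝ => (t + s * I : ℂ)⁻¹ - (t - s * I)⁻¹ := by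
  simp only [inv_add_mul_I_sub_inv_sub_mul_I hs]
  exact (integrable_inv_sq_add_sq hs).ofReal.const_mul _

lemma integral_inv_sub_inv (hε : 0 < ε) :
    ∫ t : ℝ, ((t + ε * I : ℂ)⁻¹ - (t - ε * I)⁻¹) = -2 * π * I := by
  have hε' : (ε : ℂ) ≠ 0 := ofReal_ne_zero.2 hε.ne'
  simp only [inv_add_mul_I_sub_inv_sub_mul_I hε.ne']
  rw [integral_const_mul, integral_complex_ofReal, integral_univ_inv_sq_add_sq hε, ofReal_div]
  field_simp

lemma continuous_inv_add_mul_I (hs : s ≠ 0) : Continuous fun t : ℝ => (t + s * I : ℂ)⁻¹ :=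
  Continuous.inv₀ (by fun_prop) (add_mul_I_ne_zero hs)

lemma integrable_inv_pow_add_mul_I (hs : s ≠ 0) (hn : 2 ≤ n) :
    Integrable fun t : ℝ => ((t + s * I : ℂ) ^ n)⁻¹ := by
  obtain ⟨k, rfl⟩ := Nat.exists_eq_add_of_le hn
  have hsq (t : ℝ) : ‖(t + s * I : ℂ)‖ ^ 2 = t ^ 2 + s ^ 2 := by
    rw [← normSq_eq_norm_sq, normSq_add_mul_I]
  have him (t : ℝ) : |s| ≤ ‖(t + s * I : ℂ)‖ := by
    simpa using abs_im_le_norm (t + s * I : ℂ)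
  have hcont : Continuous fun t : ℝ => ((t + s * I : ℂ) ^ (2 + k))⁻¹ := by
    simpa only [Pi.pow_def, inv_pow] using (continuous_inv_add_mul_I hs).pow (2 + k)
  refine ((integrable_inv_sq_add_sq hs).mul_const (|s| ^ k)⁻¹).mono'
    hcont.aestronglyMeasurable (.of_forall fun t => ?_)
  have : 0 < |s| := abs_pos.2 hs
  rw [norm_inv, norm_pow, pow_add, mul_inv, hsq]
  gcongr
  exact him t

lemma tendsto_inv_pow_add_mul_I (s : ℝ) (hn : n ≠ 0) :
    Tendsto (fun t : ℝ => ((t + s * I : ℂ) ^ n)⁻¹) (cocompact ℝ) (𝓝 0) := by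
  simpa [hn] using (tendsto_inv_stripEnds.comp (tendsto_horizontal_stripEnds le_rfl)).pow n

lemma integral_inv_pow_add_mul_I (hs : s ≠ 0) (hn : 2 ≤ n) :
    ∫ t : ℝ, ((t + s * I : ℂ) ^ n)⁻¹ = 0 := by
  obtain ⟨k, rfl⟩ := Nat.exists_eq_add_of_le' hn
  have hderiv (t : ℝ) : HasDerivAt (fun t : ℝ => -(k + 1 : ℂ)⁻¹ * ((t + s * I : ℂ) ^ (k + 1))⁻¹)
      ((t + s * I : ℂ) ^ (k + 2))⁻¹ t := by
    have hne := add_mul_I_ne_zero hs t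
    have hk : (k + 1 : ℂ) ≠ 0 := Nat.cast_add_one_ne_zero k
    have hline : HasDerivAt (fun t : ℝ => (t + s * I : ℂ)) 1 t :=
      (hasDerivAt_id t).ofReal_comp.add_const _
    convert! ((hline.pow (k + 1)).inv (pow_ne_zero _ hne)).const_mul (-(k + 1 : ℂ)⁻¹) using 1
    push_cast
    field_simp
    simp only [Pi.pow_apply]
    ring
  have hlim := (tendsto_inv_pow_add_mul_I s k.succ_ne_zero).const_mul (-(k + 1 : ℂ)⁻¹)
  rw [mul_zero] at hlim
  simpa using integral_of_hasDerivAt_of_tendsto hderiv (integrable_inv_pow_add_mul_I hs hn)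
    (hlim.mono_left atBot_le_cocompact) (hlim.mono_left atTop_le_cocompact)

end HorizontalIntegrals

section Residue

variable {E : Type*} [NormedAddCommGroup E] [NormedSpace ℂ E] {f : ℂ → E}
  {a r : E} {ε : ℝ} {n : ℕ}

lemma eventually_ne_zero_stripEnds : ∀ᶠ w in stripEnds ε, w ≠ 0 := by
  refine Eventually.filter_mono inf_le_left ?_
  filter_upwards [preimage_mem_comap (Set.finite_singleton (0 : ℝ)).isCompact.compl_mem_cocompact]
    with w hw h
  exact hw (by simp [h])

lemma isLittleO_inv_of_tendsto_smul (hf : Tendsto (fun w => w • f w) (𝓝[≠] 0) (𝓝 0)) :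
    f =o[𝓝[≠] 0] fun w => w⁻¹ := by
  refine ((Asymptotics.isBigO_refl (fun w : ℂ => w⁻¹) (𝓝[≠] 0)).smul_isLittleO <|
    (Asymptotics.isLittleO_one_iff ℂ).2 hf).congr' ?_ (by simp [EventuallyEq])
  exact eventually_mem_nhdsWithin.mono fun w hw => inv_smul_smul₀ hw (f w)

variable [CompleteSpace E]

lemma exists_differentiableOn_eq_sub_inv_smul {s : Set ℂ} (hs : s ∈ 𝓝 0)
    (hf : DifferentiableOn ℂ f (s \ {0})) (hres : Tendsto (fun w => w • f w) (𝓝[≠] 0) (𝓝 r)) :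
    ∃ g : ℂ → E, DifferentiableOn ℂ g s ∧ ∀ w ≠ 0, g w = f w - w⁻¹ • r := by
  let g : ℂ → E := fun w => f w - w⁻¹ • r
  refine ⟨Function.update g 0 (limUnder (𝓝[≠] 0) g),
    differentiableOn_update_limUnder_of_isLittleO hs
      (hf.sub fun w hw => ((differentiableAt_inv hw.2).smul_const r).differentiableWithinAt) ?_,
    fun w hw => Function.update_of_ne hw _ _⟩
  have hconst : Tendsto (fun w : ℂ => w • g 0) (𝓝[≠] 0) (𝓝 0) :=
    ((continuous_id.smul continuous_const).tendsto' 0 0 (by simp)).mono_left nhdsWithin_le_nhds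
  have hlim := (hres.sub_const r).sub hconst
  rw [sub_self, sub_zero] at hlim
  simp only [sub_zero]
  refine isLittleO_inv_of_tendsto_smul <| hlim.congr' <| eventually_mem_nhdsWithin.mono
    fun w hw => ?_
  simp only [g, smul_sub w, smul_inv_smul₀ hw]

lemma integral_line_sub_line_of_simple_pole (hε : 0 < ε)
    (hf : DifferentiableOn ℂ f (closedStrip ε \ {0})) (hdecay : Tendsto f (stripEnds ε) (𝓝 0))
    (hint : Integrable fun t : ℝ => f (t + ε * I) - f (t - ε * I))
    (hres : Tendsto (fun w => w • f w) (𝓝[≠] 0) (𝓝 r)) :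
    ∫ t : ℝ, (f (t + ε * I) - f (t - ε * I)) = (-2 * π * I : ℂ) • r := by
  have hnhds : closedStrip ε ∈ 𝓝 (0 : ℂ) :=
    (continuous_im.abs.tendsto' 0 0 (by simp)).eventually_le_const hε
  obtain ⟨g, hg, hgf⟩ := exists_differentiableOn_eq_sub_inv_smul hnhds hf hres
  have hline (t : ℝ) : g (t + ε * I) - g (t - ε * I) =
      f (t + ε * I) - f (t - ε * I) - ((t + ε * I : ℂ)⁻¹ - (t - ε * I)⁻¹) • r := by
    have hlow : (t - ε * I : ℂ) ≠ 0 := by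
      simpa [sub_eq_add_neg] using add_mul_I_ne_zero (neg_ne_zero.2 hε.ne') t
    rw [hgf _ (add_mul_I_ne_zero hε.ne' t), hgf _ hlow, sub_smul]
    abel
  have hinv := (integrable_inv_sub_inv hε.ne').smul_const r
  have hgdecay : Tendsto g (stripEnds ε) (𝓝 0) := by
    refine Tendsto.congr' (eventually_ne_zero_stripEnds.mono fun w hw => (hgf w hw).symm) ?_
    simpa using hdecay.sub (tendsto_inv_stripEnds.smul_const r)
  have hzero := integral_line_sub_line_eq_zero_of_differentiableOn hε.le hg hgdecay
    ((hint.sub hinv).congr (.of_forall fun t => (hline t).symm))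
  simp only [hline] at hzero
  rwa [integral_sub hint hinv, integral_smul_const, integral_inv_sub_inv hε, sub_eq_zero] at hzero

theorem integral_line_sub_line_of_two_term_pole (hε : 0 < ε) (hn : 2 ≤ n)
    (hf : DifferentiableOn ℂ f (closedStrip ε \ {0})) (hdecay : Tendsto f (stripEnds ε) (𝓝 0))
    (hint : Integrable fun t : ℝ => f (t + ε * I) - f (t - ε * I))
    (hres : Tendsto (fun w => w • (f w - (w ^ n)⁻¹ • a)) (𝓝[≠] 0) (𝓝 r)) :
    ∫ t : ℝ, (f (t + ε * I) - f (t - ε * I)) = (-2 * π * I : ℂ) • r := by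
  have hup := integrable_inv_pow_add_mul_I hε.ne' hn
  have hlow := integrable_inv_pow_add_mul_I (neg_ne_zero.2 hε.ne') hn
  have hlow_zero := integral_inv_pow_add_mul_I (neg_ne_zero.2 hε.ne') hn
  simp only [ofReal_neg, neg_mul, ← sub_eq_add_neg] at hlow hlow_zero
  have hpole : Integrable fun t : ℝ =>
      (((t + ε * I : ℂ) ^ n)⁻¹ - ((t - ε * I : ℂ) ^ n)⁻¹) • a := (hup.sub hlow).smul_const a
  have hdiff : DifferentiableOn ℂ (fun w => f w - (w ^ n)⁻¹ • a) (closedStrip ε \ {0}) :=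
    hf.sub fun w hw => (((differentiableAt_id.pow n).inv (pow_ne_zero n hw.2)).smul_const
      a).differentiableWithinAt
  have hpow : Tendsto (fun w : ℂ => (w ^ n)⁻¹) (stripEnds ε) (𝓝 0) := by
    simpa [show n ≠ 0 by lia] using tendsto_inv_stripEnds.pow n
  have hline (t : ℝ) : f (t + ε * I) - ((t + ε * I : ℂ) ^ n)⁻¹ • a -
      (f (t - ε * I) - ((t - ε * I : ℂ) ^ n)⁻¹ • a) =
      f (t + ε * I) - f (t - ε * I) -
        (((t + ε * I : ℂ) ^ n)⁻¹ - ((t - ε * I : ℂ) ^ n)⁻¹) • a := by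
    rw [sub_smul]
    abel
  have hdecay' : Tendsto (fun w => f w - (w ^ n)⁻¹ • a) (stripEnds ε) (𝓝 0) := by
    simpa only [zero_smul, sub_zero] using hdecay.sub (hpow.smul_const a)
  rw [← integral_line_sub_line_of_simple_pole hε hdiff hdecay'
    ((hint.sub hpole).congr (.of_forall fun t => (hline t).symm)) hres]
  simp only [hline]
  rw [integral_sub hint hpole, integral_smul_const, integral_sub hup hlow,
    integral_inv_pow_add_mul_I hε.ne' hn, hlow_zero, sub_zero, zero_smul, sub_zero]

theorem integral_line_of_odd_of_two_term_pole (hε : 0 < ε) (hn : 2 ≤ n)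
    (hodd : ∀ w, f (-w) = -f w) (hf : DifferentiableOn ℂ f (closedStrip ε \ {0}))
    (hdecay : Tendsto f (stripEnds ε) (𝓝 0)) (hint : Integrable fun t : ℝ => f (t + ε * I))
    (hres : Tendsto (fun w => w • (f w - (w ^ n)⁻¹ • a)) (𝓝[≠] 0) (𝓝 r)) :
    ∫ t : ℝ, f (t + ε * I) = (-π * I : ℂ) • r := by
  have hreflect (t : ℝ) : f (t - ε * I) = -f (↑(-t) + ε * I) := by
    rw [← hodd]
    congr 1
    push_cast
    ring
  have hlow : Integrable fun t : ℝ => f (t - ε * I) := by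
    simpa only [hreflect, Pi.neg_def] using hint.comp_neg.neg
  have hcontour := integral_line_sub_line_of_two_term_pole hε hn hf hdecay (hint.sub hlow) hres
  have hlow_integral : ∫ t : ℝ, f (t - ε * I) = -∫ t : ℝ, f (t + ε * I) := by
    simp only [hreflect, integral_neg]
    rw [integral_neg_eq_self fun t : ℝ => f (t + ε * I)]
  rw [integral_sub hint hlow, hlow_integral, sub_neg_eq_add, ← two_smul ℂ] at hcontour
  refine smul_right_injective E (two_ne_zero (α := ℂ)) ?_
  simp only [hcontour, smul_smul]
  congr 1
  ring

end Residue

section QuadraticTerm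

/-- `f w = 1 + c * w ^ 2 + o(w ^ 2)` as `w → 0`. The value at `0` is ignored, so that functions
such as `sinh w / w` qualify. -/
def HasQuadraticTerm {𝕜 : Type*} [NormedField 𝕜] (f : 𝕜 → 𝕜) (c : 𝕜) : Prop :=
  Tendsto (fun w => (f w - 1) / w ^ 2) (𝓝[≠] 0) (𝓝 c)

namespace HasQuadraticTerm

variable {𝕜 : Type*} [NormedField 𝕜] {f g : 𝕜 → 𝕜} {c d : 𝕜}

lemma tendsto_one (hf : HasQuadraticTerm f c) : Tendsto f (𝓝[≠] 0) (𝓝 1) := by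
  have hsq : Tendsto (fun w : 𝕜 => w ^ 2) (𝓝[≠] 0) (𝓝 0) :=
    ((continuous_pow 2).tendsto' 0 0 (by simp)).mono_left nhdsWithin_le_nhds
  have hlim := (hsq.mul hf).const_add 1
  rw [zero_mul, add_zero] at hlim
  refine hlim.congr' <| eventually_mem_nhdsWithin.mono fun w hw => ?_
  rw [mul_div_cancel₀ _ (pow_ne_zero 2 hw), add_sub_cancel]

lemma mul (hf : HasQuadraticTerm f c) (hg : HasQuadraticTerm g d) :
    HasQuadraticTerm (fun w => f w * g w) (c + d) := by
  have hlim := (Tendsto.mul hf hg.tendsto_one).add hg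
  rw [mul_one] at hlim
  exact hlim.congr fun w => by ring

lemma inv (hf : HasQuadraticTerm f c) : HasQuadraticTerm (fun w => (f w)⁻¹) (-c) := by
  have hlim := (hf.neg.mul (hf.tendsto_one.inv₀ one_ne_zero))
  rw [inv_one, mul_one] at hlim
  refine hlim.congr' <| (hf.tendsto_one.eventually_ne one_ne_zero).mono fun w hw => ?_
  field_simp
  ring

lemma comp_mul_left (hf : HasQuadraticTerm f c) {k : 𝕜} (hk : k ≠ 0) :
    HasQuadraticTerm (fun w => f (k * w)) (k ^ 2 * c) := by
  have hscale : Tendsto (fun w => k * w) (𝓝[≠] 0) (𝓝[≠] 0) :=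
    tendsto_nhdsWithin_iff.2 ⟨((continuous_const_mul k).tendsto' 0 0 (mul_zero k)).mono_left
      nhdsWithin_le_nhds, eventually_mem_nhdsWithin.mono fun w hw => mul_ne_zero hk hw⟩
  refine ((hf.comp hscale).const_mul (k ^ 2)).congr fun w => ?_
  simp only [Function.comp_apply]
  field_simp

end HasQuadraticTerm

lemma hasQuadraticTerm_cosh (k : ℂ) :
    HasQuadraticTerm (fun w => Complex.cosh (k * w)) (k ^ 2 / 2) := by
  have hderiv : HasDerivAt (fun w => Complex.sinh (k / 2 * w)) (k / 2) 0 := by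
    simpa using ((hasDerivAt_id (0 : ℂ)).const_mul (k / 2)).csinh
  have hlim := ((hasDerivAt_iff_tendsto_slope.1 hderiv).pow 2).const_mul 2
  rw [show 2 * (k / 2) ^ 2 = k ^ 2 / 2 by ring] at hlim
  refine hlim.congr fun w => ?_
  have hdouble : Complex.cosh (k * w) = 1 + 2 * Complex.sinh (k / 2 * w) ^ 2 := by
    rw [show k * w = 2 * (k / 2 * w) by ring, Complex.cosh_two_mul, Complex.cosh_sq]
    ring
  simp only [hdouble, slope_def_field, mul_zero, Complex.sinh_zero, sub_zero]
  ring

lemma hasQuadraticTerm_sinh_div : HasQuadraticTerm (fun w => Complex.sinh w / w) 6⁻¹ := by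
  have hexp := Complex.exp_sub_sum_range_succ_isLittleO_pow 3
  have hneg : (fun w : ℂ => Complex.exp (-w) - ∑ i ∈ Finset.range 4, (-w) ^ i / i.factorial)
      =o[𝓝 0] fun w => w ^ 3 := by
    have h := hexp.comp_tendsto (continuous_neg.tendsto' (0 : ℂ) 0 neg_zero)
    simpa only [Function.comp_def, Odd.neg_pow (by decide : Odd 3),
      Asymptotics.isLittleO_neg_right] using h
  have hlim := (((hexp.sub hneg).tendsto_div_nhds_zero.const_mul (1 / 2)).mono_left
    (nhdsWithin_le_nhds (s := {0}ᶜ))).add_const 6⁻¹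
  rw [mul_zero, zero_add] at hlim
  refine hlim.congr' <| eventually_mem_nhdsWithin.mono fun w hw => ?_
  have hw : w ≠ 0 := hw
  simp only [Finset.sum_range_succ, Finset.sum_range_zero, Nat.factorial, Complex.sinh]
  push_cast
  field_simp
  ring

lemma hasQuadraticTerm_div_sinh {k : ℂ} (hk : k ≠ 0) :
    HasQuadraticTerm (fun w => k * w / Complex.sinh (k * w)) (-k ^ 2 / 6) := by
  convert! (hasQuadraticTerm_sinh_div.comp_mul_left hk).inv using 1
  · simp only [inv_div]
  · ring

end QuadraticTerm

section Sinh

variable {α : ℝ} {w : ℂ}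

lemma sinh_ne_zero_of_abs_im_lt_pi (hw : w ≠ 0) (him : |w.im| < π) : Complex.sinh w ≠ 0 := by
  intro h
  obtain ⟨k, hk⟩ := Complex.sin_eq_zero_iff.1 (show Complex.sin (w * I) = 0 by
    rw [Complex.sin_mul_I, h, zero_mul])
  have hre : -w.im = k * π := by simpa using congrArg Complex.re hk
  have hk0 : k = 0 := by
    rw [← abs_neg, hre, abs_mul, abs_of_pos pi_pos, mul_lt_iff_lt_one_left pi_pos] at him
    exact Int.abs_lt_one_iff.1 (by exact_mod_cast him)
  simp [hk0, hw] at hk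

lemma exp_abs_re_le_norm_sinh (hw : 1 ≤ |w.re|) : Real.exp |w.re| ≤ 4 * ‖Complex.sinh w‖ := by
  have hdiff : Real.exp |w.re| - Real.exp (-|w.re|) ≤ 2 * ‖Complex.sinh w‖ := by
    have htwo : 2 * ‖Complex.sinh w‖ = ‖Complex.exp w - Complex.exp (-w)‖ := by
      rw [← Complex.two_sinh, norm_mul, Complex.norm_two]
    have hsub := abs_norm_sub_norm_le (Complex.exp w) (Complex.exp (-w))
    rw [← htwo, Complex.norm_exp, Complex.norm_exp, neg_re] at hsub
    rcases abs_cases w.re with ⟨habs, -⟩ | ⟨habs, -⟩ <;> rw [habs]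
    · exact (le_abs_self _).trans hsub
    · rw [neg_neg, ← neg_sub]
      exact (neg_le_abs _).trans hsub
  have hle : Real.exp (-|w.re|) ≤ 1 := Real.exp_le_one_iff.2 (by linarith)
  linarith [Real.add_one_le_exp |w.re|]

lemma isBigO_inv_sinh (hα : 0 < α) :
    (fun w : ℂ => (Complex.sinh (α * w))⁻¹) =O[comap Complex.re (cocompact ℝ)]
      fun w => Real.exp (-α * |w.re|) := by
  have hfar : Tendsto (fun w : ℂ => α * |w.re|) (comap Complex.re (cocompact ℝ)) atTop :=
    (tendsto_norm_cocompact_atTop.comp tendsto_comap).const_mul_atTop hα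
  refine .of_bound 4 <| (hfar.eventually_ge_atTop 1).mono fun w hw => ?_
  have hre : |((α : ℂ) * w).re| = α * |w.re| := by
    rw [re_ofReal_mul, abs_mul, abs_of_pos hα]
  have hexp := exp_abs_re_le_norm_sinh (hre ▸ hw)
  rw [hre] at hexp
  have hpos : 0 < ‖Complex.sinh (α * w)‖ := by linarith [Real.exp_pos (α * |w.re|)]
  rw [norm_inv, Real.norm_of_nonneg (Real.exp_pos _).le, neg_mul, Real.exp_neg]
  field_simp
  linarith

end Sinh

section FaddeevKernel

/-- The integrand of Faddeev's integral for the noncompact quantum dilogarithm, as a function of a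
complex variable `w` and with independent periods `α`, `β` in place of `b`, `b⁻¹`. -/
def faddeevKernel (α β : ℝ) (z w : ℂ) : ℂ :=
  Complex.exp (-2 * I * z * w) / (w * Complex.sinh (α * w) * Complex.sinh (β * w))

variable {α β ε δ : ℝ} {z : ℂ}

lemma faddeevKernel_neg_left (w : ℂ) : faddeevKernel α β (-z) w = -faddeevKernel α β z (-w) := by
  simp only [faddeevKernel, mul_neg, neg_mul, Complex.sinh_neg, neg_neg, div_neg]

lemma faddeevKernel_add_faddeevKernel_neg (w : ℂ) :
    faddeevKernel α β z w + faddeevKernel α β (-z) w =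
      2 * Complex.cosh (2 * I * z * w) / (w * Complex.sinh (α * w) * Complex.sinh (β * w)) := by
  rw [Complex.two_cosh, faddeevKernel, faddeevKernel, ← add_div, add_comm]
  simp only [mul_neg, neg_mul, neg_neg]

lemma tendsto_residue_faddeevKernel_add_neg (hα : α ≠ 0) (hβ : β ≠ 0) :
    Tendsto (fun w => w • (faddeevKernel α β z w + faddeevKernel α β (-z) w -
      (w ^ 3)⁻¹ • (2 / (α * β) : ℂ))) (𝓝[≠] 0)
      (𝓝 (2 / (α * β) * (-2 * z ^ 2 - (α ^ 2 + β ^ 2) / 6))) := by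
  have hα' : (α : ℂ) ≠ 0 := ofReal_ne_zero.2 hα
  have hβ' : (β : ℂ) ≠ 0 := ofReal_ne_zero.2 hβ
  have hquad := ((hasQuadraticTerm_cosh (2 * I * z)).mul
    (hasQuadraticTerm_div_sinh hα')).mul (hasQuadraticTerm_div_sinh hβ')
  have hcoeff : (2 * I * z) ^ 2 / 2 + -(α : ℂ) ^ 2 / 6 + -(β : ℂ) ^ 2 / 6 =
      -2 * z ^ 2 - (α ^ 2 + β ^ 2) / 6 := by
    linear_combination 2 * z ^ 2 * I_sq
  rw [hcoeff] at hquad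
  refine (Tendsto.const_mul (2 / (α * β) : ℂ) hquad).congr' <|
    eventually_mem_nhdsWithin.mono fun w hw => ?_
  have hw : w ≠ 0 := hw
  simp only [faddeevKernel_add_faddeevKernel_neg, smul_eq_mul]
  field_simp

lemma differentiableOn_faddeevKernel (hα : 0 < α) (hβ : 0 < β) (hαε : α * ε < π)
    (hβε : β * ε < π) : DifferentiableOn ℂ (faddeevKernel α β z) (closedStrip ε \ {0}) := by
  have hsinh {γ : ℝ} (hγ : 0 < γ) (hγε : γ * ε < π) {w : ℂ} (hw : w ∈ closedStrip ε \ {0}) :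
      Complex.sinh (γ * w) ≠ 0 := by
    refine sinh_ne_zero_of_abs_im_lt_pi (mul_ne_zero (ofReal_ne_zero.2 hγ.ne') hw.2) ?_
    rw [im_ofReal_mul, abs_mul, abs_of_pos hγ]
    exact (mul_le_mul_of_nonneg_left hw.1 hγ.le).trans_lt hγε
  exact DifferentiableOn.div (by fun_prop) (by fun_prop) fun w hw =>
    mul_ne_zero (mul_ne_zero hw.2 (hsinh hα hαε hw)) (hsinh hβ hβε hw)

lemma isBigO_exp_neg_two_mul_I (z : ℂ) (ε : ℝ) :
    (fun w : ℂ => Complex.exp (-2 * I * z * w)) =O[𝓟 (closedStrip ε)]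
      fun w => Real.exp (2 * |z.im| * |w.re|) := by
  refine .of_bound (Real.exp (2 * |z.re| * ε)) (eventually_principal.2 fun w hw => ?_)
  have hre : (-2 * I * z * w).re = 2 * (z.re * w.im) + 2 * (z.im * w.re) := by
    simp only [neg_mul, neg_re, mul_re, mul_im, re_ofNat, im_ofNat, I_re, I_im]
    ring
  rw [Complex.norm_exp, Real.norm_of_nonneg (Real.exp_pos _).le, ← Real.exp_add, hre]
  gcongr Real.exp ?_
  have hre_im : z.re * w.im ≤ |z.re| * ε :=
    (le_abs_self _).trans <| abs_mul z.re w.im ▸ mul_le_mul_of_nonneg_left hw (abs_nonneg _)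
  have him_re : z.im * w.re ≤ |z.im| * |w.re| := (le_abs_self _).trans (abs_mul _ _).le
  linarith

lemma isBigO_faddeevKernel (hα : 0 < α) (hβ : 0 < β) (z : ℂ) (ε : ℝ) :
    faddeevKernel α β z =O[stripEnds ε]
      fun w => Real.exp (-(α + β - 2 * |z.im|) * |w.re|) := by
  have hexp := (isBigO_exp_neg_two_mul_I z ε).mono (inf_le_right : stripEnds ε ≤ _)
  have hα' := (isBigO_inv_sinh hα).mono (inf_le_left : stripEnds ε ≤ _)
  have hβ' := (isBigO_inv_sinh hβ).mono (inf_le_left : stripEnds ε ≤ _)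
  refine (((hexp.mul (tendsto_inv_stripEnds.isBigO_one ℝ)).mul hα').mul hβ').congr
    (fun w => ?_) fun w => ?_
  · rw [faddeevKernel, div_eq_mul_inv, mul_inv, mul_inv]
    ring
  · rw [mul_one, ← Real.exp_add, ← Real.exp_add]
    ring_nf

lemma tendsto_faddeevKernel_stripEnds (hα : 0 < α) (hβ : 0 < β) (hz : |z.im| < (α + β) / 2)
    (ε : ℝ) : Tendsto (faddeevKernel α β z) (stripEnds ε) (𝓝 0) := by
  refine (isBigO_faddeevKernel hα hβ z ε).trans_tendsto ?_
  have hfar : Tendsto (fun w : ℂ => |w.re|) (stripEnds ε) atTop :=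
    (tendsto_norm_cocompact_atTop.comp tendsto_comap).mono_left inf_le_left
  exact Real.tendsto_exp_atBot.comp (hfar.const_mul_atTop_of_neg (by linarith))

lemma integrable_exp_neg_mul_abs (hδ : 0 < δ) : Integrable fun t : ℝ => Real.exp (-δ * |t|) := by
  rw [← integrableOn_univ, ← Set.Iic_union_Ioi (a := (0 : ℝ))]
  refine IntegrableOn.union ?_ ?_
  · refine (integrableOn_exp_mul_Iic hδ 0).congr_fun (fun t ht => ?_) measurableSet_Iic
    rw [abs_of_nonpos ht, neg_mul_neg]
  · refine (integrableOn_exp_mul_Ioi (neg_lt_zero.2 hδ) 0).congr_fun (fun t ht => ?_)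
      measurableSet_Ioi
    rw [abs_of_pos ht]

lemma integrable_faddeevKernel (hα : 0 < α) (hβ : 0 < β) (hz : |z.im| < (α + β) / 2)
    (hε : 0 < ε) (hαε : α * ε < π) (hβε : β * ε < π) :
    Integrable fun t : ℝ => faddeevKernel α β z (t + ε * I) := by
  have hcont : Continuous fun t : ℝ => faddeevKernel α β z (t + ε * I) :=
    (differentiableOn_faddeevKernel hα hβ hαε hβε).continuousOn.comp_continuous (by fun_prop)
      fun t => ⟨by simp [closedStrip, abs_of_pos hε], add_mul_I_ne_zero hε.ne' t⟩
  have hbigO := (isBigO_faddeevKernel hα hβ z ε).comp_tendsto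
    (tendsto_horizontal_stripEnds (abs_of_pos hε).le)
  refine hcont.locallyIntegrable.integrable_of_isBigO_cocompact hbigO ?_
  simpa [Function.comp_def] using (integrable_exp_neg_mul_abs
    (show 0 < α + β - 2 * |z.im| by linarith)).integrableAtFilter _

theorem integral_faddeevKernel_add_neg (hα : 0 < α) (hβ : 0 < β) (hz : |z.im| < (α + β) / 2)
    (hε : 0 < ε) (hαε : α * ε < π) (hβε : β * ε < π) :
    (∫ t : ℝ, faddeevKernel α β z (t + ε * I)) + ∫ t : ℝ, faddeevKernel α β (-z) (t + ε * I) =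
      2 * π * I / (α * β) * (2 * z ^ 2 + (α ^ 2 + β ^ 2) / 6) := by
  have hz' : |(-z).im| < (α + β) / 2 := by rwa [neg_im, abs_neg]
  have hint := integrable_faddeevKernel hα hβ hz hε hαε hβε
  have hint' := integrable_faddeevKernel hα hβ hz' hε hαε hβε
  have hodd (w : ℂ) : faddeevKernel α β z (-w) + faddeevKernel α β (-z) (-w) =
      -(faddeevKernel α β z w + faddeevKernel α β (-z) w) := by
    simp only [faddeevKernel_neg_left, neg_neg]
    ring
  have hdecay := (tendsto_faddeevKernel_stripEnds hα hβ hz ε).add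
    (tendsto_faddeevKernel_stripEnds hα hβ hz' ε)
  rw [add_zero] at hdecay
  have hdiff := (differentiableOn_faddeevKernel (z := z) hα hβ hαε hβε).fun_add
    (differentiableOn_faddeevKernel (z := -z) hα hβ hαε hβε)
  rw [← integral_add hint hint', integral_line_of_odd_of_two_term_pole hε (by norm_num) hodd hdiff
    hdecay (hint.add hint') (tendsto_residue_faddeevKernel_add_neg hα.ne' hβ.ne'), smul_eq_mul]
  ring

end FaddeevKernel

section Inversion

variable {b ε : ℝ} {z : ℂ}

lemma ebIntegrand_eq_faddeevKernel (b ε : ℝ) (z : ℂ) (t : ℝ) :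
    ebIntegrand b ε z t = faddeevKernel b b⁻¹ z (t + ε * I) := by
  simp only [ebIntegrand, faddeevKernel, ofReal_inv, mul_comm I (ε : ℂ)]

theorem ebE_mul_ebE_neg (hb : 0 < b) (hz : |z.im| < (b + b⁻¹) / 2) (hε : 0 < ε)
    (hεb : ε < π * min b b⁻¹) :
    ebE b ε z * ebE b ε (-z) =
      Complex.exp (π * I * z ^ 2) * Complex.exp (π * I * (b ^ 2 + (b : ℂ)⁻¹ ^ 2) / 12) := by
  have hb' : 0 < b⁻¹ := inv_pos.2 hb
  have hbε : b * ε < π := calc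
    b * ε < b * (π * b⁻¹) := by gcongr; exact hεb.trans_le (by gcongr; exact min_le_right _ _)
    _ = π := by field_simp
  have hbε' : b⁻¹ * ε < π := calc
    b⁻¹ * ε < b⁻¹ * (π * b) := by gcongr; exact hεb.trans_le (by gcongr; exact min_le_left _ _)
    _ = π := by field_simp
  have hsum := integral_faddeevKernel_add_neg hb hb' hz hε hbε hbε'
  rw [← ofReal_mul, mul_inv_cancel₀ hb.ne', ofReal_one, div_one, ofReal_inv] at hsum
  simp only [ebE, ebIntegrand_eq_faddeevKernel]
  rw [← Complex.exp_add, ← Complex.exp_add, ← mul_add, hsum]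
  ring_nf

theorem eb_mul_eb_neg (hb : 0 < b) (hz : |z.im| < (b + b⁻¹) / 2) :
    eb b z * eb b (-z) =
      Complex.exp (π * I * z ^ 2) * Complex.exp (π * I * (b ^ 2 + (b : ℂ)⁻¹ ^ 2) / 12) := by
  have hmin : 0 < π * min b b⁻¹ := by positivity
  exact ebE_mul_ebE_neg hb hz (half_pos hmin) (half_lt_self hmin)

lemma one_add_two_mul_cb_sq (hb : b ≠ 0) :
    1 + 2 * cb b ^ 2 = -((b : ℂ) ^ 2 + (b : ℂ)⁻¹ ^ 2) / 2 := by
  have hb' : (b : ℂ) * (b : ℂ)⁻¹ = 1 := mul_inv_cancel₀ (ofReal_ne_zero.2 hb)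
  rw [cb]
  linear_combination ((b : ℂ) + (b : ℂ)⁻¹) ^ 2 / 2 * I_sq - hb'

lemma wb_mul_wb_neg (b : ℝ) (z : ℂ) :
    wb b z * wb b (-z) =
      Complex.exp (π * I * z ^ 2) * Complex.exp (-(π * I / 6) * (1 + 2 * cb b ^ 2)) /
        (eb b z * eb b (-z)) := by
  simp only [wb, div_mul_div_comm, ← Complex.exp_add]
  ring_nf

end Inversion

/-- the inversion relation
`e_b(z)·e_b(−z) = e^{πiz²}·e^{πi(b²+b⁻²)/12}`, equivalently `w_b(z)·w_b(−z) = 1`,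
on the strip `|Im z| < (b+b⁻¹)/2`. -/
theorem statement5 (b : ℝ) (hb : 0 < b) (z : ℂ) (hz : |z.im| < (b + b⁻¹) / 2) :
    eb b z * eb b (-z) =
      Complex.exp ((π : ℂ) * Complex.I * z ^ 2) *
        Complex.exp ((π : ℂ) * Complex.I * ((b : ℂ) ^ 2 + ((b : ℂ)⁻¹) ^ 2) / 12) ∧
    wb b z * wb b (-z) = 1 := by
  refine ⟨eb_mul_eb_neg hb hz, ?_⟩
  have hphase : -((π : ℂ) * I / 6) * (1 + 2 * cb b ^ 2) =
      π * I * (b ^ 2 + (b : ℂ)⁻¹ ^ 2) / 12 := by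
    rw [one_add_two_mul_cb_sq hb.ne']
    ring
  rw [wb_mul_wb_neg, eb_mul_eb_neg hb hz, hphase]
  exact div_self (mul_ne_zero (Complex.exp_ne_zero _) (Complex.exp_ne_zero _))

end
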